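/- arXiv:2307.08948 — 6 statements merged into one kernel-verified Lean document; each statement's English description precedes it below -/
import Mathlib

section
/- Let I₁ and I₂ be maximal common independent sets of two matroids M₁ = (S, ℐ₁) and M₂ = (S, ℐ₂). Let M₁' = (M₁ | (I₁ ∪ I₂)) / (I₁ ∩ I₂) and M₂' = (M₂ | (I₁ ∪ I₂)) / (I₁ ∩ I₂). Then both I₁ \ I₂ and I₂ \ I₁ are maximal common independent sets of M₁' and M₂'. -/
/-- Deletion of `X` from the matroid `M`. -/
def Matroid.del {α : Type*} (M : Matroid α) (X : Set α) : Matroid α := M.restrict (M.E \ X)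

/-- Contraction of `X` from the matroid `M`, defined via duality. -/
def Matroid.con {α : Type*} (M : Matroid α) (X : Set α) : Matroid α := (M✶.del X)✶

section CommonIndep

open Set
open scoped Matroid

variable {α : Type*} {M₁ M₂ : Matroid α} {C I J R : Set α}

theorem con_eq_contract (M : Matroid α) (X : Set α) : M.con X = M ／ X := rfl

/-- Common independent sets of two matroids, the feasible sets of matroid intersection. The ground
sets of the matroids need not coincide. -/
def IsCommonIndep (M₁ M₂ : Matroid α) (T : Set α) : Prop := M₁.Indep T ∧ M₂.Indep T

theorem isCommonIndep_restrict_iff :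
    IsCommonIndep (M₁ ↾ R) (M₂ ↾ R) J ↔ IsCommonIndep M₁ M₂ J ∧ J ⊆ R :=
  and_and_right.symm

namespace IsCommonIndep

theorem subset (hJ : IsCommonIndep M₁ M₂ J) (hIJ : I ⊆ J) : IsCommonIndep M₁ M₂ I :=
  ⟨hJ.1.subset hIJ, hJ.2.subset hIJ⟩

theorem contract_iff (hC : IsCommonIndep M₁ M₂ C) :
    IsCommonIndep (M₁ ／ C) (M₂ ／ C) J ↔ Disjoint J C ∧ IsCommonIndep M₁ M₂ (J ∪ C) := by
  rw [IsCommonIndep, hC.1.contract_indep_iff, hC.2.contract_indep_iff]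
  exact and_and_left.symm

theorem maximal_restrict (hI : Maximal (IsCommonIndep M₁ M₂) I) (hIR : I ⊆ R) :
    Maximal (IsCommonIndep (M₁ ↾ R) (M₂ ↾ R)) I :=
  hI.mono (fun _ hJ ↦ (isCommonIndep_restrict_iff.1 hJ).1)
    (isCommonIndep_restrict_iff.2 ⟨hI.prop, hIR⟩)

theorem maximal_contract (hI : Maximal (IsCommonIndep M₁ M₂) I) (hCI : C ⊆ I) :
    Maximal (IsCommonIndep (M₁ ／ C) (M₂ ／ C)) (I \ C) := by
  have hC : IsCommonIndep M₁ M₂ C := hI.prop.subset hCI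
  refine ⟨hC.contract_iff.2 ⟨disjoint_sdiff_left, ?_⟩, fun J hJ hIJ ↦ ?_⟩
  · rw [sdiff_union_of_subset hCI]
    exact hI.prop
  · obtain ⟨hdisj, hJC⟩ := hC.contract_iff.1 hJ
    have hI_sub : I ⊆ J ∪ C := (sdiff_subset_iff.1 hIJ).trans_eq (union_comm C J)
    have hJC_sub : J ∪ C ⊆ I := hI.le_of_ge hJC hI_sub
    exact subset_sdiff.2 ⟨subset_union_left.trans hJC_sub, hdisj⟩

end IsCommonIndep

theorem stmt1_general (hI : Maximal (IsCommonIndep M₁ M₂) I) (hCI : C ⊆ I) (hIR : I ⊆ R) :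
    Maximal (IsCommonIndep ((M₁ ↾ R).con C) ((M₂ ↾ R).con C)) (I \ C) := by
  rw [con_eq_contract, con_eq_contract]
  exact IsCommonIndep.maximal_contract (IsCommonIndep.maximal_restrict hI hIR) hCI

end CommonIndep

/-- If `I₁, I₂` are maximal common independent sets of matroids `M₁, M₂`
on the same finite ground set, then `I₁ \ I₂` and `I₂ \ I₁` are maximal common independent
sets of `M₁' = (M₁ | (I₁ ∪ I₂)) / (I₁ ∩ I₂)` and `M₂' = (M₂ | (I₁ ∪ I₂)) / (I₁ ∩ I₂)`. -/
theorem stmt1 {α : Type*} [Fintype α] (M₁ M₂ : Matroid α)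
    (hE₁ : M₁.E = Set.univ) (hE₂ : M₂.E = Set.univ) {I₁ I₂ : Set α}
    (h₁ : Maximal (fun T => M₁.Indep T ∧ M₂.Indep T) I₁)
    (h₂ : Maximal (fun T => M₁.Indep T ∧ M₂.Indep T) I₂) :
    Maximal (fun T => (((M₁.restrict (I₁ ∪ I₂))).con (I₁ ∩ I₂)).Indep T ∧
        (((M₂.restrict (I₁ ∪ I₂))).con (I₁ ∩ I₂)).Indep T) (I₁ \ I₂) ∧
    Maximal (fun T => (((M₁.restrict (I₁ ∪ I₂))).con (I₁ ∩ I₂)).Indep T ∧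
        (((M₂.restrict (I₁ ∪ I₂))).con (I₁ ∩ I₂)).Indep T) (I₂ \ I₁) := by
  rw [← Set.sdiff_self_inter (s := I₁), ← Set.sdiff_inter_self_eq_sdiff (s := I₂)]
  exact ⟨stmt1_general h₁ Set.inter_subset_left Set.subset_union_left,
    stmt1_general h₂ Set.inter_subset_right Set.subset_union_right⟩
end

section
/- Let M₁ = (S, ℐ₁) and M₂ = (S, ℐ₂) be matroids on the same finite ground set S, let R be a maximum common independent set of M₁ and M₂, and let I be a maximal common independent set of M₁ and M₂ with |I| < |R|. Then there exist elements f ∈ R \ I and e ∈ I \ R such that I ∪ {f} is independent in M₁, I ∪ {f} is dependent in M₂, and (I ∪ {f}) \ {e} is independent in M₂. In particular, (I \ {e}) ∪ {f} is a common independent set of M₁ and M₂ of cardinality |I|. -/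
/-!
Augment `I` by an element `f` of `R` in `M₁`. By maximality `I ∪ {f}` contains a fundamental
circuit of `M₂`, and since `R` is independent in `M₂`, that circuit has an element `e` outside `R`;
removing `e` destroys the only `M₂`-circuit of `I ∪ {f}`.
-/

section Exchange

variable {α : Type*} {I R : Set α} {f : α}

theorem dep_insert_of_maximal {M : Matroid α} {P : Set α → Prop}
    (hI : Maximal (fun T => P T ∧ M.Indep T) I) (hP : P (insert f I)) (hfE : f ∈ M.E)
    (hfI : f ∉ I) : M.Dep (insert f I) :=
  ⟨fun h => hfI (hI.mem_of_prop_insert ⟨hP, h⟩),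
    Set.insert_subset hfE hI.prop.2.subset_ground⟩

theorem exists_mem_sdiff_indep_insert_sdiff_singleton {M : Matroid α}
    (hI : M.Indep I) (hR : M.Indep R) (hfR : f ∈ R) (hdep : M.Dep (insert f I)) :
    ∃ e ∈ I \ R, M.Indep (insert f I \ {e}) := by
  have hfI : f ∉ I := fun h => hdep.not_indep (by rwa [Set.insert_eq_of_mem h])
  have hfcl : f ∈ M.closure I := hI.mem_closure_iff.2 (Or.inl hdep)
  have hcircuit : M.IsCircuit (M.fundCircuit f I) := hI.fundCircuit_isCircuit hfcl hfI
  obtain ⟨e, heC, heR⟩ : ∃ e ∈ M.fundCircuit f I, e ∉ R :=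
    Set.not_subset.1 fun h => hcircuit.not_indep (hR.subset h)
  have heI : e ∈ I :=
    (M.fundCircuit_subset_insert f I heC).resolve_left (ne_of_mem_of_not_mem hfR heR).symm
  exact ⟨e, ⟨heI, heR⟩, (hI.mem_fundCircuit_iff hfcl hfI).1 heC⟩

theorem stmt3_general {M₁ M₂ : Matroid α} (hR₁ : M₁.Indep R) (hR₂ : M₂.Indep R)
    (hI : Maximal (fun T => M₁.Indep T ∧ M₂.Indep T) I) (hlt : I.encard < R.encard) :
    ∃ f ∈ R \ I, ∃ e ∈ I \ R,
      M₁.Indep (I ∪ {f}) ∧ M₂.Dep (I ∪ {f}) ∧ M₂.Indep ((I ∪ {f}) \ {e}) ∧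
      (M₁.Indep ((I \ {e}) ∪ {f}) ∧ M₂.Indep ((I \ {e}) ∪ {f})) ∧
      ((I \ {e}) ∪ {f}).encard = I.encard := by
  simp only [Set.union_singleton]
  obtain ⟨f, hf, hf₁⟩ := hI.prop.1.augment hR₁ hlt
  have hdep : M₂.Dep (insert f I) := dep_insert_of_maximal hI hf₁ (hR₂.subset_ground hf.1) hf.2
  obtain ⟨e, he, he₂⟩ :=
    exists_mem_sdiff_indep_insert_sdiff_singleton hI.prop.2 hR₂ hf.1 hdep
  have hswap : insert f (I \ {e}) = insert f I \ {e} :=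
    Set.insert_sdiff_singleton_comm (ne_of_mem_of_not_mem hf.1 he.2) I
  exact ⟨f, hf, e, he, hf₁, hdep, he₂,
    ⟨hswap ▸ hf₁.subset Set.sdiff_subset, hswap ▸ he₂⟩, Set.encard_exchange hf.2 he.1⟩

end Exchange

/-- If `R` is a maximum common independent set and `I` a maximal common
independent set with `|I| < |R|`, then there are `f ∈ R \ I` and `e ∈ I \ R` with
`I ∪ {f}` independent in `M₁`, `I ∪ {f}` dependent in `M₂`, and `(I ∪ {f}) \ {e}`
independent in `M₂`; in particular `(I \ {e}) ∪ {f}` is a common independent set of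
cardinality `|I|`. -/
theorem stmt3 {α : Type*} [Fintype α] (M₁ M₂ : Matroid α)
    (hE₁ : M₁.E = Set.univ) (hE₂ : M₂.E = Set.univ) {R I : Set α}
    (hR : (M₁.Indep R ∧ M₂.Indep R) ∧
      ∀ T : Set α, M₁.Indep T → M₂.Indep T → T.ncard ≤ R.ncard)
    (hI : Maximal (fun T => M₁.Indep T ∧ M₂.Indep T) I)
    (hlt : I.ncard < R.ncard) :
    ∃ f ∈ R \ I, ∃ e ∈ I \ R,
      M₁.Indep (I ∪ {f}) ∧ M₂.Dep (I ∪ {f}) ∧ M₂.Indep ((I ∪ {f}) \ {e}) ∧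
      (M₁.Indep ((I \ {e}) ∪ {f}) ∧ M₂.Indep ((I \ {e}) ∪ {f})) ∧
      ((I \ {e}) ∪ {f}).ncard = I.ncard := by
  simpa only [← Set.coe_ncard_eq_encard, Nat.cast_inj] using
    stmt3_general hR.1.1 hR.1.2 hI (by simpa only [← Set.coe_ncard_eq_encard, Nat.cast_lt])
end

section
/- Let M₁ = (S, ℐ₁) and M₂ = (S, ℐ₂) be matroids on the same finite ground set S, let I be a maximal common independent set of M₁ and M₂, and let e ∈ I and f ∈ S \ I be elements such that I ∪ {f} is independent in M₁, I ∪ {f} is dependent in M₂, and (I ∪ {f}) \ {e} is independent in M₂. Then (I \ {e}) ∪ {f} is a common independent set of M₁ and M₂, and every maximal common independent set J of M₁ and M₂ with (I \ {e}) ∪ {f} ⊆ J satisfies |J| ≤ |I| + 1. -/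
/-!
If `I` is a maximal common independent set, no common element lies outside both closures, so the
ground sets meet inside `M₁.closure I ∪ M₂.closure I`. The exchange of `e` for `f` does not change
the `M₂`-closure of `I`, so an `M₂`-independent set `J` containing `K := (I \ {e}) ∪ {f}` meets
`M₂.closure I` in exactly `K`. Hence a common independent set `J ⊇ K` is contained in
`M₁.closure I ∪ {f}`, and comparing ranks in `M₁` gives the bound.
-/

section

variable {α : Type*} {M M₁ M₂ : Matroid α} {I J K X : Set α} {e f : α}

theorem closure_insert_sdiff_singleton_eq_of_dep_of_indep (hI : M.Indep I) (he : e ∈ I)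
    (hdep : M.Dep (insert f I)) (hindep : M.Indep (insert f (I \ {e}))) :
    M.closure (insert f (I \ {e})) = M.closure I := by
  have hf : f ∉ I := fun h ↦ hdep.not_indep (by rwa [Set.insert_eq_of_mem h])
  have hf_mem : f ∈ M.closure I := (hI.mem_closure_iff_of_notMem hf).2 hdep
  have hf_notMem : f ∉ M.closure (I \ {e}) :=
    (((hI.sdiff {e}).insert_indep_iff_of_notMem fun h ↦ hf h.1).1 hindep).2
  have he_insert : insert e (I \ {e}) = I := Set.insert_sdiff_self_of_mem he
  rw [Matroid.closure_insert_congr ⟨he_insert.symm ▸ hf_mem, hf_notMem⟩, he_insert]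

theorem ground_inter_subset_closure_union_of_maximal
    (hI : Maximal (fun T ↦ M₁.Indep T ∧ M₂.Indep T) I) :
    M₁.E ∩ M₂.E ⊆ M₁.closure I ∪ M₂.closure I := by
  rintro x ⟨hx₁, hx₂⟩
  by_contra! hx
  obtain ⟨hcl₁, hcl₂⟩ := not_or.1 hx
  have hxI₁ := (hI.prop.1.notMem_closure_iff hx₁).1 hcl₁
  have hxI₂ := (hI.prop.2.notMem_closure_iff hx₂).1 hcl₂
  exact hxI₁.2 (hI.mem_of_prop_insert ⟨hxI₁.1, hxI₂.1⟩)

theorem encard_le_encard_add_encard_of_subset_closure_union (hJ : M.Indep J)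
    (hJX : J ⊆ M.closure I ∪ X) : J.encard ≤ I.encard + X.encard :=
  calc
    J.encard ≤ M.eRk (M.closure I ∪ X) := hJ.encard_le_eRk_of_subset hJX
    _ = M.eRk (I ∪ X) := M.eRk_union_closure_left_eq I X
    _ ≤ (I ∪ X).encard := M.eRk_le_encard _
    _ ≤ I.encard + X.encard := Set.encard_union_le I X

theorem encard_le_encard_add_encard_sdiff_of_closure_eq
    (hI : Maximal (fun T ↦ M₁.Indep T ∧ M₂.Indep T) I) (hJ₁ : M₁.Indep J) (hJ₂ : M₂.Indep J)
    (hKJ : K ⊆ J) (hK : M₂.closure K = M₂.closure I) :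
    J.encard ≤ I.encard + (K \ I).encard := by
  have hJK : M₂.closure I ∩ J = K := hK ▸ hJ₂.closure_inter_eq_self_of_subset hKJ
  refine encard_le_encard_add_encard_of_subset_closure_union hJ₁ fun x hxJ ↦ ?_
  rcases ground_inter_subset_closure_union_of_maximal hI
    ⟨hJ₁.subset_ground hxJ, hJ₂.subset_ground hxJ⟩ with hx₁ | hx₂
  · exact .inl hx₁
  · have hxK : x ∈ K := hJK.subset ⟨hx₂, hxJ⟩
    by_cases hxI : x ∈ I
    · exact .inl (M₁.mem_closure_of_mem hxI hI.prop.1.subset_ground)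
    · exact .inr ⟨hxK, hxI⟩

end

theorem stmt4_general {α : Type*} {M₁ M₂ : Matroid α} {I : Set α}
    (hI : Maximal (fun T ↦ M₁.Indep T ∧ M₂.Indep T) I) {e f : α} (he : e ∈ I)
    (h1 : M₁.Indep (I ∪ {f})) (h2 : M₂.Dep (I ∪ {f})) (h3 : M₂.Indep ((I ∪ {f}) \ {e})) :
    (M₁.Indep ((I \ {e}) ∪ {f}) ∧ M₂.Indep ((I \ {e}) ∪ {f})) ∧
    ∀ J : Set α, M₁.Indep J → M₂.Indep J → (I \ {e}) ∪ {f} ⊆ J → J.encard ≤ I.encard + 1 := by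
  simp only [Set.union_singleton] at h1 h2 h3 ⊢
  have hfe : f ≠ e := by
    rintro rfl
    exact h2.not_indep ((Set.insert_eq_of_mem he).symm ▸ hI.prop.2)
  rw [← Set.insert_sdiff_singleton_comm hfe] at h3
  refine ⟨⟨h1.subset (Set.insert_subset_insert Set.sdiff_subset), h3⟩, fun J hJ₁ hJ₂ hKJ ↦ ?_⟩
  have hcl := closure_insert_sdiff_singleton_eq_of_dep_of_indep hI.prop.2 he h2 h3
  have hnew : insert f (I \ {e}) \ I ⊆ {f} := by grind
  calc
    J.encard ≤ I.encard + (insert f (I \ {e}) \ I).encard :=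
      encard_le_encard_add_encard_sdiff_of_closure_eq hI hJ₁ hJ₂ hKJ hcl
    _ ≤ I.encard + ({f} : Set α).encard := by gcongr
    _ = I.encard + 1 := by rw [Set.encard_singleton]

/-- If `I` is a maximal common independent set, `e ∈ I`, `f ∈ S \ I`, with
`I ∪ {f}` independent in `M₁`, dependent in `M₂`, and `(I ∪ {f}) \ {e}` independent in `M₂`,
then `(I \ {e}) ∪ {f}` is a common independent set, and every maximal common independent
set `J` containing it satisfies `|J| ≤ |I| + 1`. -/
theorem stmt4 {α : Type*} [Fintype α] (M₁ M₂ : Matroid α)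
    (hE₁ : M₁.E = Set.univ) (hE₂ : M₂.E = Set.univ) {I : Set α}
    (hI : Maximal (fun T => M₁.Indep T ∧ M₂.Indep T) I)
    {e f : α} (he : e ∈ I) (hf : f ∉ I)
    (h1 : M₁.Indep (I ∪ {f})) (h2 : M₂.Dep (I ∪ {f}))
    (h3 : M₂.Indep ((I ∪ {f}) \ {e})) :
    (M₁.Indep ((I \ {e}) ∪ {f}) ∧ M₂.Indep ((I \ {e}) ∪ {f})) ∧
    ∀ J : Set α, Maximal (fun T => M₁.Indep T ∧ M₂.Indep T) J →
      (I \ {e}) ∪ {f} ⊆ J → J.ncard ≤ I.ncard + 1 := by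
  simp only [← Nat.cast_le (α := ℕ∞), Nat.cast_add, Nat.cast_one, (Set.toFinite _).cast_ncard_eq]
  exact (stmt4_general hI he h1 h2 h3).imp_right fun h J hJ ↦ h J hJ.prop.1 hJ.prop.2
end

section
/- Let M = (S, ℐ) be a matroid, let I be an independent set of M, let e ∈ I, and let f₁ and f₂ be two distinct elements of S \ I such that, for each i ∈ {1, 2}, the set I ∪ {fᵢ} is dependent in M and the set (I ∪ {fᵢ}) \ {e} is independent in M. Then (I \ {e}) ∪ {f₁, f₂} is dependent in M. (Applied to M₁ this gives the out-neighbor lemma and applied to M₂ the in-neighbor lemma for the exchange digraph D(I).) -/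
/-!
The closure of `(I \ {e}) ∪ {e}` contains `I`, hence also `f₁` and `f₂`. So if `J` is the union of
`X = I \ {e}` and `{f₁, f₂}`, then `J` lies in the closure of `X ∪ {e}`. Were `J` independent,
the Mac Lane–Steinitz exchange property would let `f₁` replace `e` as a generator over `X`, and
then `f₂` would lie in the closure of `X ∪ {f₁} = J \ {f₂}`.
-/

theorem sdiff_subsingleton_of_indep_of_subset_closure_insert {α : Type*} {M : Matroid α}
    {X J : Set α} {e : α} (hJ : M.Indep J) (hXJ : X ⊆ J) (hJe : J ⊆ M.closure (insert e X)) :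
    (J \ X).Subsingleton := by
  rintro f ⟨hfJ, hfX⟩ g ⟨hgJ, hgX⟩
  by_contra hfg
  have hf : f ∉ M.closure X := fun h ↦
    hJ.notMem_closure_sdiff_of_mem hfJ
      (M.closure_subset_closure (Set.subset_sdiff_singleton hXJ hfX) h)
  have hclosure : M.closure (insert f X) = M.closure (insert e X) :=
    Matroid.closure_insert_congr ⟨hJe hfJ, hf⟩
  have hg : g ∈ M.closure (insert f X) := hclosure ▸ hJe hgJ
  have hsub : insert f X ⊆ J \ {g} :=
    Set.insert_subset ⟨hfJ, hfg⟩ (Set.subset_sdiff_singleton hXJ hgX)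
  exact hJ.notMem_closure_sdiff_of_mem hgJ (M.closure_subset_closure hsub hg)

theorem stmt5_general {α : Type*} (M : Matroid α) {I : Set α} (hI : M.Indep I) {e f₁ f₂ : α}
    (hne : f₁ ≠ f₂) (hd₁ : M.Dep (I ∪ {f₁})) (hd₂ : M.Dep (I ∪ {f₂})) :
    M.Dep ((I \ {e}) ∪ {f₁, f₂}) := by
  rw [Set.union_singleton, hI.insert_dep_iff] at hd₁ hd₂
  obtain ⟨hf₁, hf₁I⟩ := hd₁
  obtain ⟨hf₂, hf₂I⟩ := hd₂
  have hJI : (I \ {e}) ∪ {f₁, f₂} ⊆ M.closure I :=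
    Set.union_subset (Set.sdiff_subset.trans (M.subset_closure I))
      (Set.pair_subset hf₁ hf₂)
  have hIe : I ⊆ insert e (I \ {e}) := Set.subset_insert_sdiff_singleton e I
  refine ⟨fun hJ ↦ hne ?_, hJI.trans (M.closure_subset_ground I)⟩
  exact sdiff_subsingleton_of_indep_of_subset_closure_insert hJ Set.subset_union_left
    (hJI.trans (M.closure_subset_closure hIe))
    ⟨by simp, fun h ↦ hf₁I h.1⟩ ⟨by simp, fun h ↦ hf₂I h.1⟩

/-- If `I` is independent in `M`, `e ∈ I`, and `f₁ ≠ f₂` are elements of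
`S \ I` such that each `I ∪ {fᵢ}` is dependent and each `(I ∪ {fᵢ}) \ {e}` is independent,
then `(I \ {e}) ∪ {f₁, f₂}` is dependent in `M`. -/
theorem stmt5 {α : Type*} [Fintype α] (M : Matroid α) (hE : M.E = Set.univ)
    {I : Set α} (hI : M.Indep I) {e f₁ f₂ : α}
    (he : e ∈ I) (hf₁ : f₁ ∉ I) (hf₂ : f₂ ∉ I) (hne : f₁ ≠ f₂)
    (hd₁ : M.Dep (I ∪ {f₁})) (hi₁ : M.Indep ((I ∪ {f₁}) \ {e}))
    (hd₂ : M.Dep (I ∪ {f₂})) (hi₂ : M.Indep ((I ∪ {f₂}) \ {e})) :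
    M.Dep ((I \ {e}) ∪ {f₁, f₂}) :=
  stmt5_general M hI hne hd₁ hd₂
end

section
/- Let M₁ = (S, ℐ₁) and M₂ = (S, ℐ₂) be matroids on the same finite ground set S, let R be a maximum common independent set of M₁ and M₂, and let I be a maximal common independent set of M₁ and M₂ with |I| < |R|. Then there exists a maximal common independent set J of M₁ and M₂ such that |I| ≤ |J|, |R △ J| < |R △ I|, and |I △ J| ≤ 3. -/
/-! The inequality `|J \ I| ≤ 2 |I \ J|` holds for every maximal common independent set `I` and
every common independent set `J`: an element of `J` lies in the closure of `I` in `M₁` or in `M₂`,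
for otherwise it could be added to `I`, and an independent set inside the closure of `I` has at
most `|I \ J|` elements outside `I`.

If moreover `|I| < |R|`, then augmentation in `M₁` and a fundamental circuit in `M₂` give
`x ∈ R \ I` and `y ∈ I \ R` such that `I + x - y` is common independent. Extend it to a maximal
common independent set `J`. Then `|I \ J| ≤ 1`, so `|J \ I| ≤ 2`. Thus `I ∆ J` has at most three
elements, two of which, `x` and `y`, lie in `R ∆ I`, so `R ∆ J = (R ∆ I) ∆ (I ∆ J)` is smaller
than `R ∆ I`. -/

open scoped symmDiff

section

variable {α : Type*}

theorem encard_symmDiff_lt_of_encard_sdiff_lt {A D : Set α} (hA : A.Finite)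
    (h : (D \ A).encard < (D ∩ A).encard) : (A ∆ D).encard < A.encard := by
  have hAD : (A \ D).encard ≠ ⊤ := hA.sdiff.encard_lt_top.ne
  calc (A ∆ D).encard ≤ (A \ D).encard + (D \ A).encard := Set.encard_union_le _ _
    _ < (A \ D).encard + (D ∩ A).encard := by rwa [ENat.add_lt_add_iff_left hAD]
    _ = A.encard := by rw [Set.inter_comm, Set.encard_sdiff_add_encard_inter]

theorem encard_symmDiff_lt_of_encard_le_three {A D : Set α} (hA : A.Finite) {x y : α}
    (hxy : x ≠ y) (hsub : {x, y} ⊆ D ∩ A) (hD : D.encard ≤ 3) :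
    (A ∆ D).encard < A.encard := by
  have hinter : 2 ≤ (D ∩ A).encard := Set.encard_pair hxy ▸ Set.encard_mono hsub
  have hdiff : (D \ A).encard ≤ 1 := by
    refine (ENat.add_le_add_iff_right (k := 2) (by simp)).1 ?_
    calc (D \ A).encard + 2 ≤ (D \ A).encard + (D ∩ A).encard := by gcongr
      _ = D.encard := Set.encard_sdiff_add_encard_inter D A
      _ ≤ 1 + 2 := hD.trans (by norm_num)
  exact encard_symmDiff_lt_of_encard_sdiff_lt hA
    ((hdiff.trans_lt (by norm_num : (1 : ℕ∞) < 2)).trans_le hinter)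

section Matroid

variable {M : Matroid α} {I J : Set α}

theorem isBasis_encard_sdiff_comm {X : Set α} (hI : M.IsBasis I X) (hJ : M.IsBasis J X) :
    (I \ J).encard = (J \ I).encard :=
  hI.isBase_restrict.encard_sdiff_comm hJ.isBase_restrict

theorem encard_sdiff_le_of_subset_closure (hI : M.Indep I) (hJ : M.Indep J)
    (hJI : J ⊆ M.closure I) : (J \ I).encard ≤ (I \ J).encard := by
  obtain ⟨K, hK, hJK⟩ := hJ.subset_isBasis_of_subset hJI
  calc (J \ I).encard ≤ (K \ I).encard := Set.encard_mono (Set.sdiff_subset_sdiff_left hJK)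
    _ = (I \ K).encard := isBasis_encard_sdiff_comm hK hI.isBasis_closure
    _ ≤ (I \ J).encard := Set.encard_mono (Set.sdiff_subset_sdiff_right hJK)

theorem encard_inter_closure_sdiff_le (hI : M.Indep I) (hJ : M.Indep J) :
    ((J ∩ M.closure I) \ I).encard ≤ (I \ J).encard :=
  (encard_sdiff_le_of_subset_closure hI (hJ.inter_right _) Set.inter_subset_right).trans
    (Set.encard_mono fun z hz => ⟨hz.1, fun hzJ => hz.2 ⟨hzJ, M.mem_closure_of_mem hz.1⟩⟩)

theorem exists_mem_sdiff_indep_insert_sdiff_singleton_s7 {R : Set α} {x : α} (hI : M.Indep I)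
    (hR : M.Indep R) (hxR : x ∈ R) (hx : ¬ M.Indep (insert x I)) :
    ∃ y ∈ I \ R, M.Indep (insert x I \ {y}) := by
  have hxI : x ∉ I := fun h => hx (by rwa [Set.insert_eq_of_mem h])
  have hxcl : x ∈ M.closure I := by
    by_contra h
    exact hx ((hI.notMem_closure_iff_of_notMem hxI (hR.subset_ground hxR)).1 h)
  obtain ⟨y, hyC, hyR⟩ : ∃ y ∈ M.fundCircuit x I, y ∉ R :=
    Set.not_subset.1 fun h => (hI.fundCircuit_isCircuit hxcl hxI).dep.not_indep (hR.subset h)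
  have hyx : y ≠ x := by
    rintro rfl
    exact hyR hxR
  have hyI : y ∈ I := (M.fundCircuit_subset_insert x I hyC).resolve_left hyx
  exact ⟨y, ⟨hyI, hyR⟩, (hI.mem_fundCircuit_iff hxcl hxI).1 hyC⟩

end Matroid

/-- `T` is a common independent set of `M₁` and `M₂`. The ground sets of `M₁` and `M₂` may differ,
and `Maximal (CommonIndep M₁ M₂)` expresses maximality under inclusion. -/
abbrev CommonIndep (M₁ M₂ : Matroid α) (T : Set α) : Prop :=
  M₁.Indep T ∧ M₂.Indep T

namespace CommonIndep

variable {M₁ M₂ : Matroid α} {I J R : Set α}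

theorem subset_closure_union_of_maximal (hI : Maximal (CommonIndep M₁ M₂) I)
    (hJ : CommonIndep M₁ M₂ J) : J ⊆ M₁.closure I ∪ M₂.closure I := by
  intro z hzJ
  by_contra hz
  obtain ⟨hz₁, hz₂⟩ := not_or.1 hz
  have hins₁ := (hI.prop.1.notMem_closure_iff (hJ.1.subset_ground hzJ)).1 hz₁
  have hins₂ := (hI.prop.2.notMem_closure_iff (hJ.2.subset_ground hzJ)).1 hz₂
  exact hins₁.2 (hI.mem_of_prop_insert ⟨hins₁.1, hins₂.1⟩)

theorem encard_sdiff_le_of_maximal (hI : Maximal (CommonIndep M₁ M₂) I)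
    (hJ : CommonIndep M₁ M₂ J) : (J \ I).encard ≤ 2 * (I \ J).encard := by
  have hcover : J \ I = (J ∩ M₁.closure I) \ I ∪ (J ∩ M₂.closure I) \ I := by
    rw [← Set.union_sdiff_distrib, ← Set.inter_union_distrib_left,
      Set.inter_eq_left.2 (subset_closure_union_of_maximal hI hJ)]
  calc (J \ I).encard
      ≤ ((J ∩ M₁.closure I) \ I).encard + ((J ∩ M₂.closure I) \ I).encard :=
        hcover ▸ Set.encard_union_le _ _
    _ ≤ (I \ J).encard + (I \ J).encard :=
        add_le_add (encard_inter_closure_sdiff_le hI.prop.1 hJ.1)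
          (encard_inter_closure_sdiff_le hI.prop.2 hJ.2)
    _ = 2 * (I \ J).encard := (two_mul _).symm

theorem exists_maximal_superset_of_finite_maximal (hI : Maximal (CommonIndep M₁ M₂) I)
    (hfin : I.Finite) (hJ : CommonIndep M₁ M₂ J) :
    ∃ K, J ⊆ K ∧ Maximal (CommonIndep M₁ M₂) K := by
  have hbdd : ∀ T, CommonIndep M₁ M₂ T → T.encard ≤ (3 * I.ncard : ℕ) := fun T hT =>
    calc T.encard ≤ (T \ I).encard + I.encard := Set.encard_le_encard_sdiff_add_encard T I
      _ ≤ 2 * I.encard + I.encard := by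
        gcongr
        exact (encard_sdiff_le_of_maximal hI hT).trans (by gcongr; exact Set.sdiff_subset)
      _ = (3 * I.ncard : ℕ) := by
        rw [← hfin.cast_ncard_eq]
        norm_cast
        ring
  simpa only [Set.subset_univ, and_true] using
    Matroid.existsMaximalSubsetProperty_of_bdd ⟨_, hbdd⟩ Set.univ J hJ (Set.subset_univ J)

theorem exists_exchange_of_encard_lt (hI : Maximal (CommonIndep M₁ M₂) I)
    (hR : CommonIndep M₁ M₂ R) (hlt : I.encard < R.encard) :
    ∃ x ∈ R \ I, ∃ y ∈ I \ R, CommonIndep M₁ M₂ (insert x I \ {y}) := by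
  obtain ⟨x, ⟨hxR, hxI⟩, hx₁⟩ := hI.prop.1.augment hR.1 hlt
  have hx₂ : ¬ M₂.Indep (insert x I) := fun h => hxI (hI.mem_of_prop_insert ⟨hx₁, h⟩)
  obtain ⟨y, hy, hxy₂⟩ := exists_mem_sdiff_indep_insert_sdiff_singleton_s7 hI.prop.2 hR.2 hxR hx₂
  exact ⟨x, ⟨hxR, hxI⟩, y, hy, hx₁.subset Set.sdiff_subset, hxy₂⟩

theorem encard_symmDiff_le_of_maximal (hI : Maximal (CommonIndep M₁ M₂) I)
    (hJ : CommonIndep M₁ M₂ J) : (I ∆ J).encard ≤ 3 * (I \ J).encard :=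
  calc (I ∆ J).encard ≤ (I \ J).encard + (J \ I).encard := Set.encard_union_le _ _
    _ ≤ (I \ J).encard + 2 * (I \ J).encard := by
      gcongr
      exact encard_sdiff_le_of_maximal hI hJ
    _ = 3 * (I \ J).encard := by ring

end CommonIndep

theorem stmt7_general {M₁ M₂ : Matroid α} {R I : Set α} (hR : CommonIndep M₁ M₂ R)
    (hRfin : R.Finite) (hI : Maximal (CommonIndep M₁ M₂) I) (hlt : I.encard < R.encard) :
    ∃ J : Set α, Maximal (CommonIndep M₁ M₂) J ∧
      I.encard ≤ J.encard ∧ (R ∆ J).encard < (R ∆ I).encard ∧ (I ∆ J).encard ≤ 3 := by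
  have hIfin : I.Finite := Set.encard_lt_top_iff.1 (hlt.trans_le le_top)
  obtain ⟨x, hx, y, hy, hxy⟩ := CommonIndep.exists_exchange_of_encard_lt hI hR hlt
  obtain ⟨J, hJsup, hJ⟩ := CommonIndep.exists_maximal_superset_of_finite_maximal hI hIfin hxy
  have hIJ₁ : (I \ J).encard ≤ 1 :=
    (Set.encard_mono (show I \ J ⊆ {y} by grind)).trans_eq (Set.encard_singleton y)
  have hIJ₃ : (I ∆ J).encard ≤ 3 :=
    (CommonIndep.encard_symmDiff_le_of_maximal hI hJ.prop).trans (mul_le_of_le_one_right' hIJ₁)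
  refine ⟨J, hJ, ?_, ?_, hIJ₃⟩
  · exact (Set.encard_exchange' hx.2 hy.1).symm.trans_le (Set.encard_mono hJsup)
  · have hyJ : y ∉ J := fun hyJ =>
      hx.2 (hI.le_of_ge hJ.prop (show I ⊆ J by grind) (hJsup (by grind)))
    have hsub : {x, y} ⊆ (I ∆ J) ∩ (R ∆ I) := by
      rintro z (rfl | rfl)
      · exact ⟨Or.inr ⟨hJsup (by grind), hx.2⟩, Or.inl hx⟩
      · exact ⟨Or.inl ⟨hy.1, hyJ⟩, Or.inr hy⟩
    have hxy_ne : x ≠ y := fun h => hx.2 (h ▸ hy.1)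
    have hRIJ : R ∆ J = (R ∆ I) ∆ (I ∆ J) := by
      rw [symmDiff_assoc, symmDiff_symmDiff_cancel_left]
    exact hRIJ ▸ encard_symmDiff_lt_of_encard_le_three (hRfin.symmDiff hIfin) hxy_ne hsub hIJ₃

end

/-- If `R` is a maximum common independent set of `M₁, M₂` and `I` a maximal
common independent set with `|I| < |R|`, then there is a maximal common independent set `J`
with `|I| ≤ |J|`, `|R ∆ J| < |R ∆ I|`, and `|I ∆ J| ≤ 3`. -/
theorem stmt7 {α : Type*} [Fintype α] (M₁ M₂ : Matroid α)
    (hE₁ : M₁.E = Set.univ) (hE₂ : M₂.E = Set.univ) {R I : Set α}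
    (hR : (M₁.Indep R ∧ M₂.Indep R) ∧
      ∀ T : Set α, M₁.Indep T → M₂.Indep T → T.ncard ≤ R.ncard)
    (hI : Maximal (fun T => M₁.Indep T ∧ M₂.Indep T) I)
    (hlt : I.ncard < R.ncard) :
    ∃ J : Set α, Maximal (fun T => M₁.Indep T ∧ M₂.Indep T) J ∧
      I.ncard ≤ J.ncard ∧ (R ∆ J).ncard < (R ∆ I).ncard ∧ (I ∆ J).ncard ≤ 3 := by
  simpa only [← (Set.toFinite _).cast_ncard_eq, Nat.cast_le, Nat.cast_lt, Nat.cast_le_ofNat] using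
    stmt7_general hR.1 R.toFinite hI (by simpa only [← (Set.toFinite _).cast_ncard_eq, Nat.cast_lt])
end

section
/- Let 𝐌 = (S, ℐ) be a matroid and G = (S, E) a finite simple graph on its ground set. Let R be a maximum matching of (𝐌, G) and let M be a maximal matching of (𝐌, G) with |M| < |R|. Then there exist edges e ∈ M \ R and f ∈ R \ M such that (M \ {e}) ∪ {f} is a matching of (𝐌, G), and moreover every maximal matching of (𝐌, G) containing (M \ {e}) ∪ {f} has cardinality at most |M| + 2. -/
/-- A set `F` of edges is a matching of the pair `(M, G)` if its edges are edges of `G`,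
pairwise vertex-disjoint, and the set of endpoints of its edges is independent in `M`. -/
def MatroidMatching {α : Type*} (M : Matroid α) (G : SimpleGraph α)
    (F : Set (Sym2 α)) : Prop :=
  F ⊆ G.edgeSet ∧ (F.Pairwise fun e f => ∀ v : α, v ∈ e → v ∉ f) ∧
    M.Indep {v : α | ∃ e ∈ F, v ∈ e}

/-! A maximal matching `M₀` is within a factor two of any matching `N`, even after deleting common
edges: `|N \ M₀| ≤ 2|M₀ \ N|`. Extend `V(M₀)` inside `V(M₀) ∪ V(N)` to a maximal independent set
`B`. By maximality of `M₀`, no edge of `N \ M₀` has both ends in `B \ V(M₀)`, so each has an end in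
`V(N) \ B` or in `V(M₀ \ N) ∩ V(N)`. Comparing bases of `V(M₀) ∪ V(N)` gives
`|V(N) \ B| ≤ |V(M₀) \ V(N)|`, so at most `|V(M₀ \ N)|` ends are available. Any matching
`N ⊇ M₀ \ {e}` thus has at most `|M₀| + 1` edges.

For the exchange, augment `V(M₀)` by a vertex `x` of `V(R)`, and let `f = s(x, y)` be its edge in
`R`. If `y` is covered by `M₀`, remove the edge of `M₀` covering it. Otherwise `V(M₀) ∪ {x, y}` is
dependent by maximality; its circuit through `y` is not contained in the independent set `V(R)`,
and we remove an edge of `M₀` covering a vertex of the circuit outside `V(R)`. -/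

open Set

theorem encard_le_of_pairwiseDisjoint_of_inter_nonempty {α ι : Type*} {s : Set ι}
    {f : ι → Set α} {t : Set α} (hs : s.PairwiseDisjoint f)
    (h : ∀ i ∈ s, (f i ∩ t).Nonempty) : s.encard ≤ t.encard := by
  rcases s.eq_empty_or_nonempty with rfl | ⟨i, hi⟩
  · simp
  have : Nonempty α := (h i hi).nonempty
  choose! v hvf hvt using h
  refine encard_le_encard_of_injOn hvt fun i hi j hj hij ↦ ?_
  exact hs.elim_set hi hj (v i) (hvf i hi) (hij ▸ hvf j hj)

section Matroid

variable {α : Type*} {M : Matroid α} {I J : Set α}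

theorem exists_indep_superset_encard_sdiff_le (hI : M.Indep I) (hJ : M.Indep J) :
    ∃ B ⊇ I, M.Indep B ∧ (J \ B).encard ≤ (I \ J).encard := by
  have hE : I ∪ J ⊆ M.E := union_subset hI.subset_ground hJ.subset_ground
  obtain ⟨B, hB, hIB⟩ := hI.subset_isBasis_of_subset subset_union_left hE
  obtain ⟨B', hB', hJB'⟩ := hJ.subset_isBasis_of_subset subset_union_right hE
  refine ⟨B, hIB, hB.indep, ?_⟩
  calc (J \ B).encard
      ≤ (B' \ B).encard := encard_le_encard (sdiff_subset_sdiff_left hJB')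
    _ = (B \ B').encard := hB'.isBase_restrict.encard_sdiff_comm hB.isBase_restrict
    _ ≤ (I \ J).encard := encard_le_encard fun v hv ↦
        have hvJ : v ∉ J := fun h ↦ hv.2 (hJB' h)
        ⟨(hB.subset hv.1).resolve_right hvJ, hvJ⟩

theorem exists_mem_sdiff_indep_insert_sdiff_singleton_s8 {y : α} (hI : M.Indep I) (hJ : M.Indep J)
    (hy : y ∈ J) (hdep : ¬ M.Indep (insert y I)) :
    ∃ c ∈ I \ J, M.Indep (insert y I \ {c}) := by
  have hyI : y ∉ I := fun h ↦ hdep (by rwa [insert_eq_of_mem h])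
  have hycl : y ∈ M.closure I := by
    by_contra h
    exact hdep ((hI.notMem_closure_iff_of_notMem hyI (hJ.subset_ground hy)).1 h)
  obtain ⟨c, hcC, hcJ⟩ : ∃ c ∈ M.fundCircuit y I, c ∉ J :=
    not_subset.1 fun h ↦ (hI.fundCircuit_isCircuit hycl hyI).dep.not_indep (hJ.subset h)
  have hcI : c ∈ I := (M.fundCircuit_subset_insert y I hcC).resolve_left fun h ↦ hcJ (h ▸ hy)
  exact ⟨c, ⟨hcI, hcJ⟩, (hI.mem_fundCircuit_iff hycl hyI).1 hcC⟩

end Matroid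

/-- The set `V(F)` of vertices covered by a set `F` of edges, in the form in which it occurs in
`MatroidMatching`. -/
def endpoints {α : Type*} (F : Set (Sym2 α)) : Set α :=
  {v | ∃ e ∈ F, v ∈ e}

section Endpoints

variable {α : Type*} {F : Set (Sym2 α)} {e : Sym2 α}

theorem endpoints_insert : endpoints (insert e F) = (e : Set α) ∪ endpoints F := by
  ext v
  simp [endpoints]

theorem endpoints_mono {F' : Set (Sym2 α)} (h : F ⊆ F') : endpoints F ⊆ endpoints F' :=
  fun _ ⟨e, he, hv⟩ ↦ ⟨e, h he, hv⟩

theorem endpoints_eq_union_image_out :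
    endpoints F = (fun e ↦ e.out.1) '' F ∪ (fun e ↦ e.out.2) '' F := by
  have hmem (v : α) (e : Sym2 α) : v ∈ e ↔ v = e.out.1 ∨ v = e.out.2 := by
    conv_lhs => rw [← Quot.out_eq e]
    exact Sym2.mem_iff
  ext v
  simp only [endpoints, hmem, mem_ofPred_eq, mem_union, mem_image]
  grind

theorem encard_endpoints_le (F : Set (Sym2 α)) : (endpoints F).encard ≤ 2 * F.encard := by
  rw [endpoints_eq_union_image_out, two_mul]
  exact (encard_union_le _ _).trans (add_le_add (encard_image_le _ _) (encard_image_le _ _))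

theorem encard_endpoints_of_pairwiseDisjoint (hF : F.PairwiseDisjoint ((↑) : Sym2 α → Set α))
    (hdiag : ∀ e ∈ F, ¬ e.IsDiag) : (endpoints F).encard = 2 * F.encard := by
  have hfst : F.InjOn fun e ↦ e.out.1 := fun e he f hf (hef : e.out.1 = f.out.1) ↦
    hF.elim_set he hf e.out.1 e.out_fst_mem (hef ▸ f.out_fst_mem)
  have hsnd : F.InjOn fun e ↦ e.out.2 := fun e he f hf (hef : e.out.2 = f.out.2) ↦
    hF.elim_set he hf e.out.2 e.out_snd_mem (hef ▸ f.out_snd_mem)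
  have hdisj : Disjoint ((fun e : Sym2 α ↦ e.out.1) '' F) ((fun e ↦ e.out.2) '' F) := by
    rw [disjoint_left]
    rintro _ ⟨e, he, rfl⟩ ⟨f, hf, hfe : f.out.2 = e.out.1⟩
    obtain rfl : e = f := hF.elim_set he hf e.out.1 e.out_fst_mem (hfe ▸ f.out_snd_mem)
    exact hdiag e he (by rw [← Quot.out_eq e]; exact Sym2.mk_isDiag_iff.2 hfe.symm)
  rw [endpoints_eq_union_image_out, encard_union_eq hdisj, hfst.encard_image, hsnd.encard_image,
    two_mul]

end Endpoints

namespace MatroidMatching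

variable {α : Type*} {M : Matroid α} {G : SimpleGraph α} {F N R M₀ : Set (Sym2 α)}
  {e f : Sym2 α}

theorem pairwiseDisjoint (hF : MatroidMatching M G F) :
    F.PairwiseDisjoint ((↑) : Sym2 α → Set α) :=
  fun _ he _ hf hef ↦ disjoint_left.2 (hF.2.1 he hf hef)

theorem eq_of_mem_of_mem (hF : MatroidMatching M G F) (he : e ∈ F) (hf : f ∈ F) {v : α}
    (hve : v ∈ e) (hvf : v ∈ f) : e = f :=
  hF.pairwiseDisjoint.elim_set he hf v hve hvf

theorem indep_endpoints (hF : MatroidMatching M G F) : M.Indep (endpoints F) :=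
  hF.2.2

theorem encard_endpoints (hF : MatroidMatching M G F) :
    (endpoints F).encard = 2 * F.encard :=
  encard_endpoints_of_pairwiseDisjoint hF.pairwiseDisjoint
    fun _ he ↦ G.not_isDiag_of_mem_edgeSet (hF.1 he)

theorem mono (hN : MatroidMatching M G N) (h : F ⊆ N) : MatroidMatching M G F :=
  ⟨h.trans hN.1, hN.2.1.mono h, hN.indep_endpoints.subset (endpoints_mono h)⟩

protected theorem insert (hF : MatroidMatching M G F) (he : e ∈ G.edgeSet)
    (hdisj : Disjoint (e : Set α) (endpoints F)) (hind : M.Indep ((e : Set α) ∪ endpoints F)) :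
    MatroidMatching M G (insert e F) := by
  rw [← endpoints_insert] at hind
  refine ⟨insert_subset he hF.1, hF.2.1.insert fun f hf _ ↦ ?_, hind⟩
  exact ⟨fun v hve hvf ↦ disjoint_left.1 hdisj hve ⟨f, hf, hvf⟩,
    fun v hvf hve ↦ disjoint_left.1 hdisj hve ⟨f, hf, hvf⟩⟩

theorem not_indep_union_endpoints_of_maximal (hM : Maximal (MatroidMatching M G) M₀)
    (he : e ∈ G.edgeSet) (hdisj : Disjoint (e : Set α) (endpoints M₀)) :
    ¬ M.Indep ((e : Set α) ∪ endpoints M₀) := fun hind ↦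
  have heM : e ∈ M₀ := hM.mem_of_prop_insert (hM.prop.insert he hdisj hind)
  disjoint_left.1 hdisj e.out_fst_mem ⟨e, heM, e.out_fst_mem⟩

theorem notMem_endpoints_sdiff_singleton (hF : MatroidMatching M G F) (he : e ∈ F) {v : α}
    (hv : v ∈ e) : v ∉ endpoints (F \ {e}) :=
  fun ⟨_, hg, hvg⟩ ↦ hg.2 (hF.eq_of_mem_of_mem hg.1 he hvg hv)

theorem inter_nonempty_of_mem_sdiff (hM : Maximal (MatroidMatching M G) M₀)
    (hN : MatroidMatching M G N) {B : Set α} (hB : M.Indep B) (hMB : endpoints M₀ ⊆ B)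
    {g : Sym2 α} (hg : g ∈ N \ M₀) :
    ((g : Set α) ∩ (endpoints N \ B ∪ endpoints (M₀ \ N) ∩ endpoints N)).Nonempty := by
  obtain ⟨hgN, hgM⟩ := hg
  by_contra hempty
  have havoid : ∀ v ∈ g, v ∉ endpoints N \ B ∪ endpoints (M₀ \ N) ∩ endpoints N :=
    fun v hv hvY ↦ hempty ⟨v, hv, hvY⟩
  have hgB : (g : Set α) ⊆ B := fun v hv ↦ by
    by_contra hvB
    exact havoid v hv (.inl ⟨⟨g, hgN, hv⟩, hvB⟩)
  have hdisj : Disjoint (g : Set α) (endpoints M₀) := by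
    refine disjoint_left.2 fun v hv ⟨h, hhM, hvh⟩ ↦ ?_
    have hhN : h ∉ N := fun hhN ↦ hgM (hN.eq_of_mem_of_mem hhN hgN hvh hv ▸ hhM)
    exact havoid v hv (.inr ⟨⟨h, ⟨hhM, hhN⟩, hvh⟩, ⟨g, hgN, hv⟩⟩)
  exact not_indep_union_endpoints_of_maximal hM (hN.1 hgN) hdisj (hB.subset (union_subset hgB hMB))

theorem encard_sdiff_le_two_mul (hM : Maximal (MatroidMatching M G) M₀)
    (hN : MatroidMatching M G N) : (N \ M₀).encard ≤ 2 * (M₀ \ N).encard := by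
  obtain ⟨B, hMB, hB, hcard⟩ :=
    exists_indep_superset_encard_sdiff_le hM.prop.indep_endpoints hN.indep_endpoints
  have hsub : endpoints M₀ \ endpoints N ⊆ endpoints (M₀ \ N) \ endpoints N :=
    fun v ⟨⟨h, hhM, hvh⟩, hvN⟩ ↦ ⟨⟨h, ⟨hhM, fun hhN ↦ hvN ⟨h, hhN, hvh⟩⟩, hvh⟩, hvN⟩
  calc (N \ M₀).encard
      ≤ (endpoints N \ B ∪ endpoints (M₀ \ N) ∩ endpoints N).encard :=
        encard_le_of_pairwiseDisjoint_of_inter_nonempty (hN.mono sdiff_subset).pairwiseDisjoint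
          fun _ hg ↦ inter_nonempty_of_mem_sdiff hM hN hB hMB hg
    _ ≤ (endpoints N \ B).encard + (endpoints (M₀ \ N) ∩ endpoints N).encard :=
        encard_union_le _ _
    _ ≤ (endpoints (M₀ \ N) \ endpoints N).encard + (endpoints (M₀ \ N) ∩ endpoints N).encard :=
        add_le_add_left (hcard.trans (encard_le_encard hsub)) _
    _ = (endpoints (M₀ \ N)).encard := encard_sdiff_add_encard_inter _ _
    _ ≤ 2 * (M₀ \ N).encard := encard_endpoints_le _

theorem encard_le_add_encard_sdiff (hM : Maximal (MatroidMatching M G) M₀)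
    (hN : MatroidMatching M G N) : N.encard ≤ M₀.encard + (M₀ \ N).encard :=
  calc N.encard
      = (N \ M₀).encard + (N ∩ M₀).encard := (encard_sdiff_add_encard_inter N M₀).symm
    _ ≤ 2 * (M₀ \ N).encard + (N ∩ M₀).encard := add_le_add_left (encard_sdiff_le_two_mul hM hN) _
    _ = (M₀ \ N).encard + (M₀ ∩ N).encard + (M₀ \ N).encard := by rw [inter_comm]; ring
    _ = M₀.encard + (M₀ \ N).encard := by rw [encard_sdiff_add_encard_inter]

theorem exists_augmenting_edge (hF : MatroidMatching M G F) (hR : MatroidMatching M G R)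
    (hlt : F.encard < R.encard) :
    ∃ x y, s(x, y) ∈ R ∧ x ∉ endpoints F ∧ M.Indep (insert x (endpoints F)) := by
  have hcard : (endpoints F).encard < (endpoints R).encard := by
    rw [hF.encard_endpoints, hR.encard_endpoints]
    exact ENat.mul_right_strictMono two_ne_zero (ENat.natCast_ne_top 2) hlt
  obtain ⟨x, ⟨⟨f, hfR, hxf⟩, hxF⟩, hx⟩ := hF.indep_endpoints.augment hR.indep_endpoints hcard
  obtain ⟨y, rfl⟩ := Sym2.mem_iff_exists.1 hxf
  exact ⟨x, y, hfR, hxF, hx⟩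

theorem exists_indep_union_endpoints_sdiff_singleton (hM : Maximal (MatroidMatching M G) M₀)
    (hR : MatroidMatching M G R) {x y : α} (hfR : s(x, y) ∈ R) (hxM : x ∉ endpoints M₀)
    (hx : M.Indep (insert x (endpoints M₀))) :
    ∃ e ∈ M₀ \ R, y ∉ endpoints (M₀ \ {e}) ∧
      M.Indep ((s(x, y) : Set α) ∪ endpoints (M₀ \ {e})) := by
  by_cases hyM : y ∈ endpoints M₀
  · have ⟨e, heM, hye⟩ := hyM
    have heR : e ∉ R := by
      intro heR
      obtain rfl := hR.eq_of_mem_of_mem heR hfR hye (Sym2.mem_mk_right x y)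
      exact hxM ⟨_, heM, Sym2.mem_mk_left x y⟩
    refine ⟨e, ⟨heM, heR⟩, hM.prop.notMem_endpoints_sdiff_singleton heM hye, hx.subset ?_⟩
    rw [Sym2.coe_mk, insert_union, singleton_union]
    exact insert_subset_insert (insert_subset hyM (endpoints_mono sdiff_subset))
  · have hdisj : Disjoint (s(x, y) : Set α) (endpoints M₀) := by simp [hxM, hyM]
    have hdep : ¬ M.Indep (insert y (insert x (endpoints M₀))) := by
      rw [insert_comm, ← singleton_union (a := y), ← insert_union, ← Sym2.coe_mk]
      exact not_indep_union_endpoints_of_maximal hM (hR.1 hfR) hdisj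
    have hxR : x ∈ endpoints R := ⟨_, hfR, Sym2.mem_mk_left x y⟩
    have hyR : y ∈ endpoints R := ⟨_, hfR, Sym2.mem_mk_right x y⟩
    obtain ⟨c, ⟨hc, hcR⟩, hind⟩ :=
      exists_mem_sdiff_indep_insert_sdiff_singleton_s8 hx hR.indep_endpoints hyR hdep
    obtain ⟨e, heM, hce⟩ : c ∈ endpoints M₀ := hc.resolve_left fun h ↦ hcR (h ▸ hxR)
    have hcM : c ∉ endpoints (M₀ \ {e}) := hM.prop.notMem_endpoints_sdiff_singleton heM hce
    have hsub : endpoints (M₀ \ {e}) ⊆ endpoints M₀ := endpoints_mono sdiff_subset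
    refine ⟨e, ⟨heM, fun heR ↦ hcR ⟨e, heR, hce⟩⟩, fun h ↦ hyM (hsub h), hind.subset ?_⟩
    rw [Sym2.coe_mk]
    grind

theorem exists_exchange (hM : Maximal (MatroidMatching M G) M₀) (hR : MatroidMatching M G R)
    (hlt : M₀.encard < R.encard) :
    ∃ e ∈ M₀ \ R, ∃ f ∈ R \ M₀, MatroidMatching M G ((M₀ \ {e}) ∪ {f}) := by
  obtain ⟨x, y, hfR, hxM, hx⟩ := hM.prop.exists_augmenting_edge hR hlt
  obtain ⟨e, he, hy, hind⟩ := exists_indep_union_endpoints_sdiff_singleton hM hR hfR hxM hx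
  have hfM : s(x, y) ∉ M₀ := fun h ↦ hxM ⟨_, h, Sym2.mem_mk_left x y⟩
  have hxe : x ∉ endpoints (M₀ \ {e}) := fun h ↦ hxM (endpoints_mono sdiff_subset h)
  have hdisj : Disjoint (s(x, y) : Set α) (endpoints (M₀ \ {e})) := by simp [hxe, hy]
  refine ⟨e, he, s(x, y), ⟨hfR, hfM⟩, ?_⟩
  rw [union_singleton]
  exact (hM.prop.mono sdiff_subset).insert (hR.1 hfR) hdisj hind

end MatroidMatching

theorem stmt8_general {α : Type*} (M : Matroid α) (G : SimpleGraph α) {R M₀ : Set (Sym2 α)}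
    (hR : MatroidMatching M G R) (hM : Maximal (MatroidMatching M G) M₀)
    (hlt : M₀.encard < R.encard) :
    ∃ e ∈ M₀ \ R, ∃ f ∈ R \ M₀,
      MatroidMatching M G ((M₀ \ {e}) ∪ {f}) ∧
      ∀ N : Set (Sym2 α), MatroidMatching M G N →
        M₀ \ {e} ⊆ N → N.encard ≤ M₀.encard + 1 := by
  obtain ⟨e, he, f, hf, hmatch⟩ := MatroidMatching.exists_exchange hM hR hlt
  refine ⟨e, he, f, hf, hmatch, fun N hN hsub ↦ ?_⟩
  have hcard : (M₀ \ N).encard ≤ 1 := by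
    rw [← encard_singleton e]
    exact encard_le_encard (sdiff_subset_comm.1 hsub)
  exact (MatroidMatching.encard_le_add_encard_sdiff hM hN).trans (add_le_add_right hcard _)

/-- If `R` is a maximum matching of `(M, G)` and `M₀` a maximal matching with
`|M₀| < |R|`, then there are edges `e ∈ M₀ \ R` and `f ∈ R \ M₀` such that
`(M₀ \ {e}) ∪ {f}` is a matching of `(M, G)` and every maximal matching containing it has
cardinality at most `|M₀| + 2`. -/
theorem stmt8 {α : Type*} [Fintype α] (M : Matroid α) (hE : M.E = Set.univ)
    (G : SimpleGraph α) {R M₀ : Set (Sym2 α)}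
    (hR : MatroidMatching M G R ∧
      ∀ F : Set (Sym2 α), MatroidMatching M G F → F.ncard ≤ R.ncard)
    (hM : Maximal (MatroidMatching M G) M₀)
    (hlt : M₀.ncard < R.ncard) :
    ∃ e ∈ M₀ \ R, ∃ f ∈ R \ M₀,
      MatroidMatching M G ((M₀ \ {e}) ∪ {f}) ∧
      ∀ N : Set (Sym2 α), Maximal (MatroidMatching M G) N →
        (M₀ \ {e}) ∪ {f} ⊆ N → N.ncard ≤ M₀.ncard + 2 := by
  have hcast (F : Set (Sym2 α)) : F.encard = F.ncard := (toFinite F).cast_ncard_eq.symm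
  obtain ⟨e, he, f, hf, hmatch, hN⟩ :=
    stmt8_general M G hR.1 hM (by simpa only [hcast, Nat.cast_lt])
  refine ⟨e, he, f, hf, hmatch, fun N hNmax hsub ↦ Nat.le_succ_of_le ?_⟩
  have hcard : (N.ncard : ℕ∞) ≤ M₀.ncard + 1 := by
    simpa only [hcast] using hN N hNmax.prop (subset_union_left.trans hsub)
  exact_mod_cast hcard
end
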